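/- arXiv:2605.06081 — 3 statements merged into one kernel-verified Lean document; each statement's English description precedes it below -/
import Mathlib

section
/- Decomposition of the softmax covariance (Theorem 1, output space): for every logit vector z ∈ ℝ^C with C ≥ 2 and true class ⋆, in the coordinate order (z_⋆, z_{−⋆}), the softmax covariance matrix satisfies diag(p) − p p^T = p_⋆ p_† (∇_z s)(∇_z s)^T + p_† B, where B is the block matrix with zero first row and column and lower-right block diag(ρ) − ρ ρ^T; moreover the residual block p_†(diag(ρ) − ρ ρ^T) is positive semidefinite. -/
/-!
Conditioning on the event `⋆` exhibits `p` as the mixture `p_⋆ e_⋆ + p_† ρ` of a point mass and the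
competitor distribution. By the law of total covariance, the covariance of a two-component mixture
is the mixture of the covariances plus a rank-one term along the difference of the means. Here the
point mass has covariance zero and the difference of the means is `ρ - e_⋆ = ∇_z s`. The residual is
thus a nonnegative multiple of a covariance matrix, hence positive semidefinite.
-/

open Matrix

section CategoricalCovariance

variable {ι R : Type*} [DecidableEq ι]

/-- The covariance matrix of the one-hot encoding of an `ι`-valued random variable with law `p`.
It is defined for every vector `p`, not only for probability vectors. -/
def categoricalCovariance [Ring R] (p : ι → R) : Matrix ι ι R :=
  diagonal p - vecMulVec p p

theorem categoricalCovariance_single_one [Ring R] (i : ι) :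
    categoricalCovariance (Pi.single i (1 : R)) = 0 := by
  rw [categoricalCovariance, diagonal_single, single_eq_single_vecMulVec_single, sub_self]

theorem categoricalCovariance_smul_add_smul [CommRing R] {a b : R} (hab : a + b = 1) (u v : ι → R) :
    categoricalCovariance (a • u + b • v) =
      (a * b) • vecMulVec (v - u) (v - u) + a • categoricalCovariance u +
        b • categoricalCovariance v := by
  obtain rfl : b = 1 - a := eq_sub_of_add_eq' hab
  have hdiag : diagonal (a • u + (1 - a) • v) = a • diagonal u + (1 - a) • diagonal v := by
    rw [← diagonal_smul, ← diagonal_smul, diagonal_add]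
    rfl
  simp only [categoricalCovariance, hdiag, add_vecMulVec, vecMulVec_add, sub_vecMulVec,
    vecMulVec_sub, smul_vecMulVec, vecMulVec_smul]
  module

/-- The factor `1 - vecMulVec 1 p` is the centering map `x ↦ x - 𝔼[x]`. -/
theorem categoricalCovariance_eq_mul_diagonal_mul [Ring R] [Fintype ι] {p : ι → R}
    (hp : ∑ i, p i = 1) :
    categoricalCovariance p = (1 - vecMulVec p 1) * diagonal p * (1 - vecMulVec 1 p) := by
  have hmul : diagonal p *ᵥ 1 = p := by
    ext i
    simp [mulVec_diagonal]
  have hvec : 1 ᵥ* diagonal p = p := by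
    ext i
    simp [vecMul_diagonal]
  have hsum : p ⬝ᵥ 1 = 1 := by rw [dotProduct_one, hp]
  simp only [categoricalCovariance, sub_mul, mul_sub, one_mul, mul_one, vecMulVec_mul,
    mul_vecMulVec, vecMulVec_mulVec, hmul, hvec, hsum, MulOpposite.op_one, one_smul, sub_self,
    sub_zero]

theorem posSemidef_categoricalCovariance [Ring R] [PartialOrder R] [StarRing R]
    [StarOrderedRing R] [Fintype ι] {p : ι → R} (hp : p ∈ stdSimplex R ι) :
    (categoricalCovariance p).PosSemidef := by
  have hstar : star p = p := funext fun i => (IsSelfAdjoint.of_nonneg (hp.1 i)).star_eq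
  have hcenter : (1 - vecMulVec 1 p : Matrix ι ι R)ᴴ = 1 - vecMulVec p 1 := by
    rw [conjTranspose_sub, conjTranspose_one, conjTranspose_vecMulVec, hstar, star_one]
  rw [categoricalCovariance_eq_mul_diagonal_mul hp.2, ← hcenter]
  exact (PosSemidef.diagonal hp.1).conjTranspose_mul_mul_same _

end CategoricalCovariance

section ConditionalNe

variable {ι K : Type*} [DecidableEq ι] [Field K]

/-- The conditional law given the outcome is not `i`, for an outcome with law `p`. It is a vector on
the whole of `ι` which vanishes at `i`, and is meaningful only for `p i ≠ 1`. -/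
def conditionalNe (p : ι → K) (i : ι) : ι → K :=
  Function.update (fun j => p j / (1 - p i)) i 0

theorem smul_single_add_smul_conditionalNe {p : ι → K} {i : ι} (hi : p i ≠ 1) :
    p i • Pi.single i 1 + (1 - p i) • conditionalNe p i = p := by
  have hne : 1 - p i ≠ 0 := sub_ne_zero.mpr hi.symm
  ext j
  obtain rfl | hj := eq_or_ne j i
  · simp [conditionalNe]
  · simp [conditionalNe, hj, mul_div_cancel₀ _ hne]

theorem conditionalNe_mem_stdSimplex [LinearOrder K] [IsStrictOrderedRing K] [Fintype ι]
    {p : ι → K} {i : ι} (hp : p ∈ stdSimplex K ι) (hi : p i ≠ 1) :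
    conditionalNe p i ∈ stdSimplex K ι := by
  constructor
  · intro j
    obtain rfl | hj := eq_or_ne j i
    · simp [conditionalNe]
    · have hle : 0 ≤ 1 - p i := sub_nonneg.mpr (mem_Icc_of_mem_stdSimplex hp i).2
      simpa [conditionalNe, hj] using div_nonneg (hp.1 j) hle
  · have hcompl : ∑ j ∈ Finset.univ \ {i}, p j = 1 - p i := by
      rw [Finset.sdiff_singleton_eq_erase, Finset.sum_erase_eq_sub (Finset.mem_univ i), hp.2]
    rw [conditionalNe, Finset.sum_update_of_mem (Finset.mem_univ i), ← Finset.sum_div, hcompl,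
      div_self (sub_ne_zero.mpr hi.symm), zero_add]

theorem categoricalCovariance_eq_add_conditionalNe {p : ι → K} {i : ι} (hi : p i ≠ 1) :
    categoricalCovariance p =
      (p i * (1 - p i)) • vecMulVec (conditionalNe p i - Pi.single i 1)
          (conditionalNe p i - Pi.single i 1) +
        (1 - p i) • categoricalCovariance (conditionalNe p i) := by
  have h := categoricalCovariance_smul_add_smul (add_sub_cancel (p i) 1) (Pi.single i 1)
    (conditionalNe p i)
  rwa [smul_single_add_smul_conditionalNe hi, categoricalCovariance_single_one, smul_zero,
    add_zero] at h

end ConditionalNe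

section Softmax

variable {ι : Type*} [Fintype ι]

/-- The probability vector proportional to the exponentials of the logits `z`. -/
noncomputable def softmax (z : ι → ℝ) (i : ι) : ℝ :=
  Real.exp (z i) / ∑ j, Real.exp (z j)

theorem softmax_mem_stdSimplex [Nonempty ι] (z : ι → ℝ) : softmax z ∈ stdSimplex ℝ ι := by
  have hpos : 0 < ∑ j, Real.exp (z j) :=
    Finset.sum_pos (fun j _ => Real.exp_pos _) Finset.univ_nonempty
  refine ⟨fun i => (div_pos (Real.exp_pos _) hpos).le, ?_⟩
  simp only [softmax]
  rw [← Finset.sum_div, div_self hpos.ne']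

theorem softmax_lt_one [Nontrivial ι] (z : ι → ℝ) (i : ι) : softmax z i < 1 := by
  obtain ⟨j, hj⟩ := exists_ne i
  have hlt : Real.exp (z i) < ∑ k, Real.exp (z k) :=
    Finset.single_lt_sum hj (Finset.mem_univ i) (Finset.mem_univ j) (Real.exp_pos _)
      fun k _ _ => (Real.exp_pos _).le
  exact (div_lt_one ((Real.exp_pos _).trans hlt)).mpr hlt

end Softmax

theorem softmax_covariance_decomposition_general {ι K : Type*} [Fintype ι] [DecidableEq ι]
    [Field K] [LinearOrder K] [StarRing K] [StarOrderedRing K]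
    {p : ι → K} (hp : p ∈ stdSimplex K ι) {i : ι} (hi : p i ≠ 1)
    {q : K} (hq : q = 1 - p i)
    {ρ : ι → K} (hρ : ∀ j, j ≠ i → ρ j = p j / q)
    {g : ι → K} (hg : ∀ c, g c = if c = i then -1 else ρ c)
    {B : Matrix ι ι K}
    (hB : ∀ c c', B c c' =
      if c = i ∨ c' = i then 0
      else (if c = c' then ρ c else 0) - ρ c * ρ c') :
    diagonal p - vecMulVec p p = (p i * q) • vecMulVec g g + q • B ∧ (q • B).PosSemidef := by
  subst hq
  have hg' : g = conditionalNe p i - Pi.single i 1 := by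
    ext c
    by_cases hc : c = i <;> simp [hg, conditionalNe, hc, hρ]
  have hB' : B = categoricalCovariance (conditionalNe p i) := by
    ext c c'
    by_cases hc : c = i <;> by_cases hc' : c' = i <;>
      simp [hB, categoricalCovariance, conditionalNe, diagonal_apply, vecMulVec_apply, hc, hc', hρ]
  have hle : 0 ≤ 1 - p i := sub_nonneg.mpr (mem_Icc_of_mem_stdSimplex hp i).2
  rw [hg', hB']
  exact ⟨categoricalCovariance_eq_add_conditionalNe hi,
    (posSemidef_categoricalCovariance (conditionalNe_mem_stdSimplex hp hi)).smul hle⟩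

/-- Theorem 1 (output space): decomposition of the softmax covariance.
In the coordinate order `(z_⋆, z_{-⋆})` (encoded here by keeping the full
index set and zeroing the `⋆` row/column of the residual block `B`),
`diag p - p pᵀ = p_⋆ p_† (∇_z s)(∇_z s)ᵀ + p_† B`, where `B` has zero `⋆`
row and column and lower-right block `diag ρ - ρ ρᵀ`; moreover the residual
`p_† B` is positive semidefinite. -/
theorem softmax_covariance_decomposition
    (C : ℕ) (hC : 2 ≤ C) (star : Fin C) (z : Fin C → ℝ)
    (p : Fin C → ℝ) (hp : ∀ c, p c = Real.exp (z c) / ∑ j, Real.exp (z j))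
    (pdag : ℝ) (hpdag : pdag = 1 - p star)
    (ρ : Fin C → ℝ) (hρ : ∀ j, j ≠ star → ρ j = p j / pdag)
    (g : Fin C → ℝ) (hg : ∀ c, g c = if c = star then -1 else ρ c)
    (B : Matrix (Fin C) (Fin C) ℝ)
    (hB : ∀ c c', B c c' =
      if c = star ∨ c' = star then 0
      else (if c = c' then ρ c else 0) - ρ c * ρ c') :
    Matrix.diagonal p - Matrix.vecMulVec p p
      = (p star * pdag) • Matrix.vecMulVec g g + pdag • B ∧
    (pdag • B).PosSemidef := by
  have : Nontrivial (Fin C) := Fin.nontrivial_iff_two_le.mpr hC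
  obtain rfl : p = softmax z := funext hp
  exact softmax_covariance_decomposition_general (softmax_mem_stdSimplex z)
    (softmax_lt_one z star).ne hpdag hρ hg hB
end

section
/- Decomposition of the multiclass softmax GGN (Theorem 1, parameter space): for every logit vector z ∈ ℝ^C with C ≥ 2 and true class ⋆, and every matrix J_z ∈ ℝ^{C×d} with rows J_⋆ (true class) and J_{−⋆} ∈ ℝ^{(C−1)×d} (competitors), one has J_z^T (diag(p) − p p^T) J_z = p_⋆ p_† J_s^T J_s + p_† J_{−⋆}^T (diag(ρ) − ρ ρ^T) J_{−⋆}, where J_s = −J_⋆ + ρ^T J_{−⋆}. -/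
/-!
The form `Aᵀ (diag w - w wᵀ) A` collects the covariances of the columns of `A` under the weights
`w`, so the decomposition is the law of total covariance for the mixture of a point mass at the true
class (weight `p_⋆`) with the competitor distribution `ρ` (weight `1 - p_⋆`): the rank-one term is
the covariance between the two groups, the other the covariance within the competitors.
What makes `p` this mixture is `p_c = (1 - p_⋆) ρ_c` for every competitor `c`; for the softmax,
dividing by `1 - p_⋆` is legitimate since `p_⋆ < 1` as soon as there is a competitor.
-/

section WeightedCov

variable {ι R : Type*} [Fintype ι]

/-- The covariance `∑ w f g - (∑ w f) (∑ w g)` of two functions on a finite type under the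
weights `w`, which are arbitrary ring elements: they need not be nonnegative or sum to `1`. -/
def weightedCov [CommRing R] (w f g : ι → R) : R :=
  ∑ c, w c * (f c * g c) - (∑ c, w c * f c) * ∑ c, w c * g c

lemma transpose_mul_diagonal_sub_vecMulVec_mul_apply {m n : Type*} [CommRing R] [DecidableEq ι]
    (A : Matrix ι m R) (w : ι → R) (B : Matrix ι n R) (i : m) (j : n) :
    (A.transpose * (Matrix.diagonal w - Matrix.vecMulVec w w) * B) i j
      = weightedCov w (A.col i) (B.col j) := by
  have diagonal_part : (A.transpose * Matrix.diagonal w * B) i j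
      = ∑ c, w c * (A c i * B c j) := by
    simp only [Matrix.mul_apply (N := B), Matrix.mul_diagonal, Matrix.transpose_apply]
    exact Finset.sum_congr rfl fun c _ => by ring
  have rank_one_part : (A.transpose * Matrix.vecMulVec w w * B) i j
      = (∑ c, w c * A c i) * ∑ c, w c * B c j := by
    simp only [Matrix.mul_vecMulVec, Matrix.vecMulVec_mul, Matrix.vecMulVec_apply,
      Matrix.mulVec_transpose, Matrix.vecMul, dotProduct]
  rw [Matrix.mul_sub, Matrix.sub_mul, Matrix.sub_apply, diagonal_part, rank_one_part]
  rfl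

variable [DecidableEq ι] {star : ι} {p : ι → R} {ρ : {c // c ≠ star} → R}

lemma sum_mul_eq_add_mul_sum_subtype_ne [NonUnitalSemiring R] {q : R}
    (hρ : ∀ c : {c // c ≠ star}, p c = q * ρ c) (f : ι → R) :
    ∑ c, p c * f c = p star * f star + q * ∑ c, ρ c * f c := by
  simp only [Fintype.sum_eq_add_sum_subtype_ne _ star, Finset.mul_sum, hρ, mul_assoc]

lemma weightedCov_eq_between_add_within [CommRing R]
    (hρ : ∀ c : {c // c ≠ star}, p c = (1 - p star) * ρ c) (f g : ι → R) :
    weightedCov p f g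
      = p star * (1 - p star) * ((-f star + ∑ c, ρ c * f c) * (-g star + ∑ c, ρ c * g c))
        + (1 - p star) * weightedCov ρ (fun c => f c) (fun c => g c) := by
  simp only [weightedCov, sum_mul_eq_add_mul_sum_subtype_ne hρ f,
    sum_mul_eq_add_mul_sum_subtype_ne hρ g,
    sum_mul_eq_add_mul_sum_subtype_ne hρ fun c => f c * g c]
  ring

end WeightedCov

lemma softmax_lt_one_s6 {ι : Type*} [Fintype ι] {star c : ι} (hc : c ≠ star) (z : ι → ℝ) :
    Real.exp (z star) / ∑ j, Real.exp (z j) < 1 := by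
  have exp_lt_sum : Real.exp (z star) < ∑ j, Real.exp (z j) :=
    Finset.single_lt_sum (f := fun j => Real.exp (z j)) hc (Finset.mem_univ _)
      (Finset.mem_univ _) (Real.exp_pos _) fun _ _ _ => (Real.exp_pos _).le
  exact (div_lt_one ((Real.exp_pos _).trans exp_lt_sum)).mpr exp_lt_sum

theorem softmax_ggn_decomposition_general {ι κ R : Type*} [Fintype ι] [DecidableEq ι] [CommRing R]
    {star : ι} {p : ι → R} {ρ : {c // c ≠ star} → R}
    (hρ : ∀ c : {c // c ≠ star}, p c = (1 - p star) * ρ c)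
    {Jz : Matrix ι κ R} {Jm : Matrix {c // c ≠ star} κ R} (hJm : ∀ c j, Jm c j = Jz c j)
    {Js : κ → R} (hJs : ∀ j, Js j = -Jz star j + ∑ c, ρ c * Jm c j) :
    Jz.transpose * (Matrix.diagonal p - Matrix.vecMulVec p p) * Jz
      = (p star * (1 - p star)) • Matrix.vecMulVec Js Js
        + (1 - p star) •
          (Jm.transpose * (Matrix.diagonal ρ - Matrix.vecMulVec ρ ρ) * Jm) := by
  ext i j
  have competitor_col (k : κ) : Jm.col k = fun c => Jz.col k c.1 := funext fun c => hJm c k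
  have margin_entry (k : κ) : Js k = -Jz.col k star + ∑ c, ρ c * Jz.col k c := by
    simp only [hJs, hJm, Matrix.col_apply]
  rw [Matrix.add_apply, Matrix.smul_apply, Matrix.smul_apply, Matrix.vecMulVec_apply,
    transpose_mul_diagonal_sub_vecMulVec_mul_apply, transpose_mul_diagonal_sub_vecMulVec_mul_apply,
    competitor_col, competitor_col, margin_entry, margin_entry, smul_eq_mul, smul_eq_mul]
  exact weightedCov_eq_between_add_within hρ (Jz.col i) (Jz.col j)

/-- Theorem 1 (parameter space): decomposition of the multiclass softmax GGN.
With competitor rows `Jm` (the rows of `Jz` indexed by classes `c ≠ ⋆`) and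
margin Jacobian row `Js = -J_⋆ + ρᵀ Jm`,
`Jzᵀ (diag p - p pᵀ) Jz = p_⋆ p_† Jsᵀ Js + p_† Jmᵀ (diag ρ - ρ ρᵀ) Jm`. -/
theorem softmax_ggn_decomposition
    (C d : ℕ) (hC : 2 ≤ C) (star : Fin C) (z : Fin C → ℝ)
    (p : Fin C → ℝ) (hp : ∀ c, p c = Real.exp (z c) / ∑ j, Real.exp (z j))
    (pdag : ℝ) (hpdag : pdag = 1 - p star)
    (ρ : {c : Fin C // c ≠ star} → ℝ) (hρ : ∀ j, ρ j = p j / pdag)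
    (Jz : Matrix (Fin C) (Fin d) ℝ)
    (Jm : Matrix {c : Fin C // c ≠ star} (Fin d) ℝ)
    (hJm : ∀ c j, Jm c j = Jz c j)
    (Js : Fin d → ℝ)
    (hJs : ∀ j, Js j = -Jz star j + ∑ c, ρ c * Jm c j) :
    Jz.transpose * (Matrix.diagonal p - Matrix.vecMulVec p p) * Jz
      = (p star * pdag) • Matrix.vecMulVec Js Js
        + pdag • (Jm.transpose * (Matrix.diagonal ρ - Matrix.vecMulVec ρ ρ) * Jm) := by
  subst hpdag
  refine softmax_ggn_decomposition_general (fun c => ?_) hJm hJs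
  rw [hρ, mul_div_cancel₀ _ (sub_pos.mpr (hp star ▸ softmax_lt_one_s6 c.2 z)).ne']
end

section
/- Exactness of FGN in the binary case (Proposition 1, item 2): if C = 2, then for every logit vector z ∈ ℝ² with true class ⋆ and every matrix J_z ∈ ℝ^{2×d}, H^FGN = H^GGN, i.e. p_⋆ p_† J_s^T J_s = J_z^T(diag(p) − p p^T)J_z. -/
/-! The Jacobian enters both sides only through a congruence `A ↦ Jᵀ A J`, so everything reduces to
the softmax covariance `diag p - p pᵀ`. It annihilates constant vectors because the weights sum to
`1`; with two classes it is therefore a multiple of `v vᵀ`, where `v = e_t - e_s` is the difference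
of the competitor and true-class basis vectors, and `v` pulls back along `J` to the margin row. -/

open Finset Matrix

theorem sum_exp_div_sum_exp {ι : Type*} [Fintype ι] [Nonempty ι] (z : ι → ℝ) :
    ∑ c, Real.exp (z c) / ∑ j, Real.exp (z j) = 1 := by
  have sum_pos : 0 < ∑ j, Real.exp (z j) :=
    Finset.sum_pos (fun j _ ↦ Real.exp_pos (z j)) univ_nonempty
  rw [← sum_div, div_self sum_pos.ne']

section CommRing

variable {ι n R : Type*} [Fintype ι] [CommRing R]

theorem transpose_mul_vecMulVec_self_mul (J : Matrix ι n R) (v : ι → R) :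
    Jᵀ * vecMulVec v v * J = vecMulVec (v ᵥ* J) (v ᵥ* J) := by
  rw [mul_vecMulVec, vecMulVec_mul, mulVec_transpose]

variable [DecidableEq ι]

theorem diagonal_sub_vecMulVec_self_of_univ_erase_eq_singleton {s t : ι}
    (hst : univ.erase s = {t}) {p : ι → R} (hp : ∑ c, p c = 1) :
    diagonal p - vecMulVec p p = (p s * (1 - p s)) •
      vecMulVec (Pi.single t 1 - Pi.single s 1) (Pi.single t 1 - Pi.single s 1) := by
  have ts : t ≠ s := ne_of_mem_erase (hst ▸ mem_singleton_self t)
  have pt : p t = 1 - p s := by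
    rw [← hp, ← add_sum_erase _ p (mem_univ s), hst, sum_singleton, add_sub_cancel_left]
  have eq_or_eq (c : ι) : c = s ∨ c = t :=
    or_iff_not_imp_left.2 fun cs ↦ mem_singleton.1 (hst ▸ mem_erase.2 ⟨cs, mem_univ c⟩)
  ext i j
  rcases eq_or_eq i with rfl | rfl <;> rcases eq_or_eq j with rfl | rfl <;>
    simp [vecMulVec_apply, ts, ts.symm, pt] <;> ring

theorem fgn_exact_binary_general (hι : Fintype.card ι = 2) (star : ι)
    (p : ι → R) (hp : ∑ c, p c = 1) (pdag : R) (hpdag : pdag = 1 - p star)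
    (J : Matrix ι n R) (Js : n → R)
    (hJs : ∀ j, Js j = -J star j + ∑ c ∈ univ.erase star, J c j) :
    (p star * pdag) • vecMulVec Js Js = Jᵀ * (diagonal p - vecMulVec p p) * J := by
  obtain ⟨t, ht⟩ : ∃ t, univ.erase star = {t} := by
    rw [← card_eq_one, card_erase_of_mem (mem_univ star), card_univ, hι]
  have margin_row : (Pi.single t 1 - Pi.single star 1) ᵥ* J = Js := by
    ext j
    rw [sub_vecMul, single_one_vecMul, single_one_vecMul, hJs, ht, sum_singleton, neg_add_eq_sub]
    rfl
  rw [diagonal_sub_vecMulVec_self_of_univ_erase_eq_singleton ht hp, Matrix.mul_smul,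
    Matrix.smul_mul, transpose_mul_vecMulVec_self_mul, margin_row, hpdag]

end CommRing

/-- Proposition 1, item 2: exactness of FGN in the binary case `C = 2`.
Since the single competitor weight is `ρ = 1`, the margin row is
`Js = -J_⋆ + J_{-⋆}` and `H^FGN = p_⋆ p_† Jsᵀ Js` coincides with
`H^GGN = Jzᵀ (diag p - p pᵀ) Jz`. -/
theorem fgn_exact_binary
    (d : ℕ) (star : Fin 2) (z : Fin 2 → ℝ)
    (p : Fin 2 → ℝ) (hp : ∀ c, p c = Real.exp (z c) / ∑ j, Real.exp (z j))
    (pdag : ℝ) (hpdag : pdag = 1 - p star)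
    (Jz : Matrix (Fin 2) (Fin d) ℝ)
    (Js : Fin d → ℝ)
    (hJs : ∀ j, Js j = -Jz star j + ∑ c ∈ Finset.univ.erase star, Jz c j) :
    (p star * pdag) • Matrix.vecMulVec Js Js
      = Jz.transpose * (Matrix.diagonal p - Matrix.vecMulVec p p) * Jz := by
  have sum_p : ∑ c, p c = 1 := by simpa only [hp] using sum_exp_div_sum_exp z
  exact fgn_exact_binary_general (Fintype.card_fin 2) star p sum_p pdag hpdag Jz Js hJs
end
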